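/- The infinite series identity 165π/(4√3) = Σ_{k=0}^{∞} (1/4)^k · [(5/6)_k (5/3)_k] / [(17/12)_k (23/12)_k] · (108k² + 174k + 71) / ((k + 1)(6k + 1)) holds, where the sum is over natural numbers k and all quantities are real numbers. -/

import Mathlib

noncomputable def risingFactorial (a : ℝ) (k : ℕ) : ℝ := ∏ i ∈ Finset.range k, (a + i)

open Filter Topology Finset

lemma rf_zero (a : ℝ) : risingFactorial a 0 = 1 := by simp [risingFactorial]

lemma rf_succ (a : ℝ) (n : ℕ) :
    risingFactorial a (n+1) = risingFactorial a n * (a + n) := by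
  simp [risingFactorial, Finset.prod_range_succ]

lemma rf_pos {a : ℝ} (ha : 0 < a) (n : ℕ) : 0 < risingFactorial a n := by
  unfold risingFactorial
  exact Finset.prod_pos fun i _ => by positivity

lemma rf_mono {a b : ℝ} (ha : 0 < a) (hab : a ≤ b) (n : ℕ) :
    risingFactorial a n ≤ risingFactorial b n := by
  unfold risingFactorial
  exact Finset.prod_le_prod (fun i _ => by positivity) fun i _ => by linarith

lemma rf_shift (a : ℝ) (n : ℕ) :
    risingFactorial (a+1) n * a = risingFactorial a n * (a + n) := by
  induction n with
  | zero => simp [rf_zero]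
  | succ n ih =>
    rw [rf_succ, rf_succ]; push_cast
    linear_combination (a + 1 + n) * ih

lemma rf_two (n : ℕ) : risingFactorial 2 n = risingFactorial 1 n * (n + 1) := by
  have := rf_shift 1 n
  norm_num at this
  rw [this]; ring

/-- the dominating ratio -/
noncomputable def pr (n : ℕ) : ℝ := risingFactorial (1/3) n / risingFactorial (7/6) n

lemma pr_pos (n : ℕ) : 0 < pr n :=
  div_pos (rf_pos (by norm_num) n) (rf_pos (by norm_num) n)

lemma pr_succ (n : ℕ) : pr (n+1) = pr n * ((1/3 + n) / (7/6 + n)) := by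
  unfold pr
  rw [rf_succ, rf_succ, mul_div_mul_comm]

lemma pr_sq (n : ℕ) : pr n ^ 2 * (n + 1) ≤ 1 := by
  induction n with
  | zero => simp [pr, rf_zero]
  | succ n ih =>
    refine le_trans ?_ ih
    rw [pr_succ, mul_pow, mul_assoc]
    refine mul_le_mul_of_nonneg_left ?_ (sq_nonneg _)
    have hn : (0:ℝ) ≤ n := Nat.cast_nonneg n
    rw [div_pow, div_mul_eq_mul_div, div_le_iff₀ (by positivity)]
    push_cast
    nlinarith [mul_nonneg hn hn]

lemma pr_le (n : ℕ) : pr n ≤ 1 / ((n:ℝ) + 1) ^ (1/2 : ℝ) := by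
  have e : 1 / Real.sqrt ((n:ℝ) + 1) = Real.sqrt (1 / ((n:ℝ) + 1)) := by
    rw [Real.sqrt_div (by norm_num), Real.sqrt_one]
  rw [← Real.sqrt_eq_rpow, e]
  apply Real.le_sqrt_of_sq_le
  rw [le_div_iff₀ (by positivity)]
  exact pr_sq n

lemma pr_tendsto : Tendsto pr atTop (𝓝 0) := by
  refine squeeze_zero (fun n => (pr_pos n).le) pr_le ?_
  have h := (tendsto_rpow_neg_atTop (show (0:ℝ) < 1/2 by norm_num)).comp
    (tendsto_natCast_atTop_atTop (R := ℝ))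
  have h2 := (tendsto_add_atTop_iff_nat 1).2 h
  refine h2.congr fun n => ?_
  simp only [Function.comp]
  rw [Real.rpow_neg (by positivity)]
  push_cast
  simp

lemma pr_summable : Summable fun n : ℕ => pr n / ((n:ℝ) + 1) := by
  have h := (summable_nat_add_iff 1).2 (Real.summable_one_div_nat_rpow.2 (show (1:ℝ) < 3/2 by norm_num))
  refine Summable.of_nonneg_of_le (fun n => div_nonneg (pr_pos n).le (by positivity)) (fun n => ?_) h
  have e : (((n + 1 : ℕ) : ℝ)) ^ (3/2 : ℝ) = ((n:ℝ)+1) ^ (1/2 : ℝ) * ((n:ℝ) + 1) := by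
    push_cast
    rw [show (3/2:ℝ) = 1/2 + 1 by norm_num, Real.rpow_add (by positivity), Real.rpow_one]
  rw [e, ← div_div]
  gcongr
  exact pr_le n

lemma telescope (f G : ℕ → ℕ → ℝ) (ε b : ℕ → ℝ) (hb : Summable b)
    (hε : Tendsto ε atTop (𝓝 0))
    (h0 : ∀ k n, 0 ≤ f k n) (hf : ∀ k n, f k n ≤ ε k * b n)
    (hG : ∀ k, Tendsto (G k) atTop (𝓝 0))
    (hrec : ∀ k n, f k n - f (k+1) n = G k (n+1) - G k n) :
    Tendsto (fun K => ∑ k ∈ range K, (- G k 0)) atTop (𝓝 (∑' n, f 0 n)) := by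
  have hs : ∀ k, Summable (f k) := fun k =>
    Summable.of_nonneg_of_le (h0 k) (hf k) (hb.mul_left _)
  have step : ∀ k, - G k 0 = ∑' n, f k n - ∑' n, f (k+1) n := by
    intro k
    have h1 := ((hs k).hasSum.sub (hs (k+1)).hasSum).tendsto_sum_nat
    have h2 : Tendsto (fun N => ∑ n ∈ range N, (f k n - f (k+1) n)) atTop (𝓝 (0 - G k 0)) := by
      simp_rw [hrec, Finset.sum_range_sub]
      exact (hG k).sub_const _
    have := tendsto_nhds_unique h1 h2
    linarith
  have hlim : Tendsto (fun k => ∑' n, f k n) atTop (𝓝 0) := by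
    refine squeeze_zero (fun k => tsum_nonneg (h0 k))
      (fun k => ((hs k).tsum_le_tsum (hf k) (hb.mul_left _)).trans_eq tsum_mul_left) ?_
    simpa using hε.mul_const (∑' n, b n)
  have e : ∀ K, ∑ k ∈ range K, (- G k 0) = ∑' n, f 0 n - ∑' n, f K n := by
    intro K
    simp_rw [step]
    exact Finset.sum_range_sub' (fun k => ∑' n, f k n) K
  simp_rw [e]
  simpa using hlim.const_sub (∑' n, f 0 n)

noncomputable def qq (j n : ℕ) : ℝ := risingFactorial (1/3) n / risingFactorial (7/6 + j) n

lemma qq_pos (j n : ℕ) : 0 < qq j n :=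
  div_pos (rf_pos (by norm_num) n) (rf_pos (by positivity) n)

lemma qq_le (j n : ℕ) : qq j n ≤ pr n := by
  unfold qq pr
  have := rf_pos (show (0:ℝ) < 1/3 by norm_num) n
  have h2 := rf_pos (show (0:ℝ) < 7/6 by norm_num) n
  gcongr
  exact rf_mono (by norm_num) (by simp) n

lemma qq_tendsto (j : ℕ) : Tendsto (qq j) atTop (𝓝 0) :=
  squeeze_zero (fun n => (qq_pos j n).le) (qq_le j) pr_tendsto

lemma qq_n (j n : ℕ) : qq j (n+1) = qq j n * ((1/3 + n) / (7/6 + j + n)) := by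
  unfold qq
  rw [rf_succ, rf_succ, mul_div_mul_comm]

lemma qq_j (j n : ℕ) : qq (j+1) n = qq j n * ((7/6 + j) / (7/6 + j + n)) := by
  unfold qq
  have h := rf_shift (7/6 + j) n
  have h1 := rf_pos (show (0:ℝ) < 7/6 + j by positivity) n
  have h2 := rf_pos (show (0:ℝ) < 7/6 + j + 1 by positivity) n
  push_cast
  rw [← add_assoc, div_mul_div_comm, div_eq_div_iff h2.ne' (by positivity), ← h]
  ring

lemma base1 : Tendsto (fun K => ∑ j ∈ range K, (1 / (((j:ℝ) + 1/6) * (j + 5/6)))) atTop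
    (𝓝 (6 * ∑' n : ℕ, pr n / ((n:ℝ) + 1))) := by
  have h := telescope (fun j n => qq j n / ((n + 1) * (j + 1/6)))
    (fun j n => - qq j n / ((j + 1/6) * (j + 5/6))) (fun j => 1 / ((j:ℝ) + 1/6))
    (fun n : ℕ => pr n / ((n:ℝ) + 1)) pr_summable ?_ ?_ ?_ ?_ ?_
  · convert h using 2
    · refine Finset.sum_congr rfl fun j _ => ?_
      simp only [qq, rf_zero]
      ring
    · rw [← tsum_mul_left]
      congr 1
      ext n
      simp only [qq, pr]
      norm_num
      field_simp
  · have := tendsto_const_div_atTop_nhds_zero_nat (1:ℝ)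
    refine Tendsto.div_atTop tendsto_const_nhds ?_
    exact tendsto_atTop_add_const_right _ _ tendsto_natCast_atTop_atTop
  · intro k n
    have := qq_pos k n
    positivity
  · intro k n
    have := qq_le k n
    rw [← div_div, div_mul_eq_mul_div, one_mul]
    gcongr
  · intro k
    simpa using ((qq_tendsto k).neg).div_const (((k:ℝ) + 1/6) * (k + 5/6))
  · intro k n
    rw [qq_n, qq_j]
    push_cast
    have : (0:ℝ) < 7/6 + k + n := by positivity
    have : (0:ℝ) < (k:ℝ) + 1 + 1/6 := by positivity
    have : (0:ℝ) < (k:ℝ) + 1/6 := by positivity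
    have : (0:ℝ) < (k:ℝ) + 5/6 := by positivity
    field_simp
    ring

lemma base2 : Tendsto (fun K => ∑ j ∈ range K, (1 / (((j:ℝ) + 1/6) * (j + 5/6)))) atTop
    (𝓝 (3/2 * (Real.pi * Real.sqrt 3))) := by
  have hx : ((1/6 : ℝ) : ℂ) ∈ Complex.integerComplement := by
    rintro ⟨m, hm⟩
    have h1 : ((m:ℝ)) = 1/6 := by exact_mod_cast hm
    have h2 : (6 * m : ℝ) = 1 := by rw [h1]; norm_num
    have h3 : 6 * m = 1 := by exact_mod_cast h2
    omega
  have h := tendsto_logDeriv_euler_cot_sub hx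
  have hc : (Real.pi : ℂ) * Complex.cot (Real.pi * ((1/6 : ℝ) : ℂ)) - 1 / ((1/6 : ℝ) : ℂ)
      = ((Real.pi * Real.sqrt 3 - 6 : ℝ) : ℂ) := by
    rw [← Complex.ofReal_mul, ← Complex.ofReal_cot, ← Complex.ofReal_mul, Real.cot_eq_cos_div_sin,
      show Real.pi * (1/6) = Real.pi / 6 by ring, Real.cos_pi_div_six, Real.sin_pi_div_six]
    push_cast
    ring
  rw [hc] at h
  have h' : Tendsto (fun n : ℕ => ∑ j ∈ range n, (1 / ((1/6:ℝ) - (j + 1)) + 1 / (1/6 + (j + 1))))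
      atTop (𝓝 (Real.pi * Real.sqrt 3 - 6)) := by
    have := (Complex.continuous_re.tendsto _).comp h
    rw [Complex.ofReal_re] at this
    refine this.congr fun n => ?_
    simp only [Function.comp]
    rw [← Complex.ofReal_re (∑ j ∈ range n, _)]
    congr 1
    push_cast
    rfl
  have hz : Tendsto (fun n : ℕ => 1 / ((n:ℝ) + 1/6)) atTop (𝓝 0) := by
    refine Tendsto.div_atTop tendsto_const_nhds ?_
    exact tendsto_atTop_add_const_right _ _ tendsto_natCast_atTop_atTop
  have h3 := ((h'.add_const 6).sub hz).const_mul (3/2)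
  convert h3 using 2 with n
  · induction n with
    | zero => norm_num
    | succ n ih =>
      rw [Finset.sum_range_succ, Finset.sum_range_succ, ih]
      have e : (1/6:ℝ) - (n + 1) = -(n + 5/6) := by ring
      rw [e]
      push_cast
      have : (0:ℝ) < 1/6 + (n + 1) := by positivity
      have : (0:ℝ) < (n:ℝ) + 1 + 1/6 := by positivity
      have : (0:ℝ) < (n:ℝ) + 1/6 := by positivity
      have : (0:ℝ) < (n:ℝ) + 5/6 := by positivity
      field_simp
      ring
  · ring

lemma base : ∑' n : ℕ, pr n / ((n:ℝ) + 1) = Real.pi * Real.sqrt 3 / 4 := by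
  have := tendsto_nhds_unique base1 base2
  linarith

noncomputable def gg (k : ℕ) : ℝ :=
  (1/4 : ℝ) ^ k * (risingFactorial (5/6) k * risingFactorial (5/3) k) /
        (risingFactorial (17/12) k * risingFactorial (23/12) k)

lemma gg_pos (k : ℕ) : 0 < gg k := by
  have h1 := rf_pos (show (0:ℝ) < 5/6 by norm_num) k
  have h2 := rf_pos (show (0:ℝ) < 5/3 by norm_num) k
  have h3 := rf_pos (show (0:ℝ) < 17/12 by norm_num) k
  have h4 := rf_pos (show (0:ℝ) < 23/12 by norm_num) k
  unfold gg
  positivity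

lemma gg_le (k : ℕ) : gg k ≤ (1/4 : ℝ) ^ k := by
  have h1 := rf_pos (show (0:ℝ) < 5/6 by norm_num) k
  have h2 := rf_pos (show (0:ℝ) < 5/3 by norm_num) k
  have h3 := rf_pos (show (0:ℝ) < 17/12 by norm_num) k
  have h4 := rf_pos (show (0:ℝ) < 23/12 by norm_num) k
  unfold gg
  rw [div_le_iff₀ (by positivity)]
  gcongr
  · exact rf_mono (by norm_num) (by norm_num) k
  · exact rf_mono (by norm_num) (by norm_num) k

lemma gg_succ (k : ℕ) : gg (k+1) =
    gg k * (1/4 * ((5/6 + k) * (5/3 + k)) / ((17/12 + k) * (23/12 + k))) := by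
  have h3 := rf_pos (show (0:ℝ) < 17/12 by norm_num) k
  have h4 := rf_pos (show (0:ℝ) < 23/12 by norm_num) k
  unfold gg
  rw [rf_succ, rf_succ, rf_succ, rf_succ, pow_succ, div_mul_div_comm]
  congr 1 <;> ring

noncomputable def cc (k : ℕ) : ℝ :=
  gg k * ((12 * k + 5) * (12 * k + 11) / ((k + 1) * (6 * k + 1)))

lemma cc_pos (k : ℕ) : 0 < cc k := by
  have := gg_pos k
  unfold cc; positivity

lemma cc_le (k : ℕ) : cc k ≤ (1/4:ℝ)^k * 55 := by
  unfold cc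
  have := gg_le k
  have hk : (0:ℝ) ≤ k := Nat.cast_nonneg k
  refine mul_le_mul this ?_ (by positivity) (by positivity)
  rw [div_le_iff₀ (by positivity)]
  nlinarith

/-- the factor `n! / (2+k)_n` -/
noncomputable def ss (j n : ℕ) : ℝ := risingFactorial 1 n / risingFactorial (2 + j) n

lemma ss_pos (j n : ℕ) : 0 < ss j n :=
  div_pos (rf_pos (by norm_num) n) (rf_pos (by positivity) n)

lemma ss_le (j n : ℕ) : ss j n ≤ 1 / ((n:ℝ) + 1) := by
  unfold ss
  have h1 := rf_pos (show (0:ℝ) < 1 by norm_num) n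
  have h2 := rf_pos (show (0:ℝ) < 2 + j by positivity) n
  rw [div_le_div_iff₀ h2 (by positivity), ← rf_two, one_mul]
  exact rf_mono (by norm_num) (by simp) n

lemma ss_n (j n : ℕ) : ss j (n+1) = ss j n * ((1 + n) / (2 + j + n)) := by
  unfold ss
  rw [rf_succ, rf_succ, mul_div_mul_comm]

lemma ss_j (j n : ℕ) : ss (j+1) n = ss j n * ((2 + j) / (2 + j + n)) := by
  unfold ss
  have h := rf_shift (2 + j) n
  have h1 := rf_pos (show (0:ℝ) < 2 + j by positivity) n
  have h2 := rf_pos (show (0:ℝ) < 2 + j + 1 by positivity) n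
  push_cast
  rw [← add_assoc, div_mul_div_comm, div_eq_div_iff h2.ne' (by positivity), ← h]
  ring

lemma cc_succ (k : ℕ) : cc (k+1) = cc k * ((5/6 + k) * (5/3 + k) * (1 + k) * (1/6 + k) /
    ((2 + k) * (7/6 + k) * (2 * k + 11/6) * (2 * k + 5/6))) := by
  unfold cc
  rw [gg_succ]
  push_cast
  have : (0:ℝ) < 17/12 + k := by positivity
  have : (0:ℝ) < 23/12 + k := by positivity
  field_simp
  ring

lemma main_lim : Tendsto (fun K => ∑ k ∈ range K,
      (gg k * ((108 * (k:ℝ)^2 + 174 * (k:ℝ) + 71) / (((k:ℝ) + 1) * (6 * (k:ℝ) + 1))))) atTop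
    (𝓝 (55 * (Real.pi * Real.sqrt 3 / 4))) := by
  have h := telescope (fun k n => cc k * (ss k n * qq k n))
    (fun k n => - (cc k * (ss k n * qq k n)) *
      (n / (2 * k + 5/6) + (108 * (k:ℝ)^2 + 174 * k + 71) / ((12 * k + 5) * (12 * k + 11))))
    (fun k => (1/4:ℝ)^k * 55) (fun n : ℕ => pr n / ((n:ℝ) + 1)) pr_summable ?_ ?_ ?_ ?_ ?_
  · convert h using 2
    · refine Finset.sum_congr rfl fun k _ => ?_
      simp only [cc, ss, qq, rf_zero]
      push_cast
      field_simp
      ring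
    · rw [← base, ← tsum_mul_left]
      congr 1
      ext n
      have h1 := rf_pos (show (0:ℝ) < 1 by norm_num) n
      simp only [cc, ss, qq, pr, gg, rf_zero]
      norm_num
      rw [rf_two]
      field_simp
  · simpa using (tendsto_pow_atTop_nhds_zero_of_lt_one (show (0:ℝ) ≤ 1/4 by norm_num)
      (by norm_num)).mul_const 55
  · intro k n
    have := qq_pos k n
    have := ss_pos k n
    have := cc_pos k
    positivity
  · intro k n
    refine mul_le_mul (cc_le k) ?_ (mul_pos (ss_pos k n) (qq_pos k n)).le (by positivity)
    rw [div_eq_mul_one_div, mul_comm]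
    exact mul_le_mul (qq_le k n) (ss_le k n) (ss_pos k n).le (pr_pos n).le
  · intro k
    set B : ℝ := (108 * (k:ℝ)^2 + 174 * k + 71) / ((12 * k + 5) * (12 * k + 11)) with hB
    have hB0 : 0 ≤ B := by positivity
    have h1 : Tendsto (fun n => cc k * (1 / (2 * k + 5/6) + B) * pr n) atTop (𝓝 0) := by
      simpa using pr_tendsto.const_mul (cc k * (1 / (2 * k + 5/6) + B))
    refine squeeze_zero_norm (fun n => ?_) h1
    have hq := qq_pos k n
    have hs := ss_pos k n
    have hc := cc_pos k
    have hn : (0:ℝ) ≤ n := Nat.cast_nonneg n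
    rw [neg_mul, norm_neg, Real.norm_of_nonneg (by positivity)]
    have e : ss k n * (n / (2 * k + 5/6) + B) ≤ 1 / (2 * k + 5/6) + B := by
      have h3 : ss k n * (n + 1) ≤ 1 := by
        have := ss_le k n
        rwa [le_div_iff₀ (by positivity)] at this
      have h4 : (n / (2 * k + 5/6) + B) ≤ (n + 1) * (1 / (2 * k + 5/6) + B) := by
        have : (0:ℝ) ≤ 1 / (2 * k + 5/6) := by positivity
        rw [div_eq_mul_one_div]
        nlinarith [mul_nonneg hn hB0]
      calc _ ≤ ss k n * ((n + 1) * (1 / (2 * k + 5/6) + B)) := by gcongr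
        _ = (ss k n * (n + 1)) * (1 / (2 * k + 5/6) + B) := by ring
        _ ≤ 1 * (1 / (2 * k + 5/6) + B) := by gcongr
        _ = _ := one_mul _
    calc _ = cc k * (ss k n * (n / (2 * k + 5/6) + B)) * qq k n := by ring
      _ ≤ _ := by
        gcongr
        exact qq_le k n
  · intro k n
    rw [qq_n, qq_j, ss_n, ss_j, cc_succ]
    push_cast
    have : (0:ℝ) < 7/6 + k + n := by positivity
    have : (0:ℝ) < 2 + (k:ℝ) + n := by positivity
    field_simp
    ring

theorem stmt_14 :
    165 * Real.pi / (4 * Real.sqrt 3) =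
      ∑' k : ℕ, (1/4 : ℝ) ^ k * (risingFactorial (5/6) k * risingFactorial (5/3) k) /
        (risingFactorial (17/12) k * risingFactorial (23/12) k) * ((108 * (k:ℝ)^2 + 174 * (k:ℝ) + 71) / (((k:ℝ) + 1) * (6 * (k:ℝ) + 1))) := by
  have h : HasSum (fun k : ℕ => gg k *
      ((108 * (k:ℝ)^2 + 174 * (k:ℝ) + 71) / (((k:ℝ) + 1) * (6 * (k:ℝ) + 1))))
      (55 * (Real.pi * Real.sqrt 3 / 4)) := by
    rw [hasSum_iff_tendsto_nat_of_nonneg]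
    · exact main_lim
    · intro k
      have := gg_pos k
      positivity
  have h2 := h.tsum_eq
  simp only [gg] at h2
  rw [h2]
  have h3 : Real.sqrt 3 ^ 2 = 3 := Real.sq_sqrt (by norm_num)
  have h4 : 0 < Real.sqrt 3 := by positivity
  rw [div_eq_iff (by positivity)]
  linear_combination (-55 * Real.pi) * h3
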